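/- Fix integers k, m ≥ 1 with d = k + m ≥ 2, and define S : ℂ → ℂ by S(w) = 1/C(1/w) (with S(0) = 0). Then S has derivative 2d²/(2d² − 3d + 1) at 0; in particular this multiplier of the fixed point ∞ of C is strictly greater than 1, so ∞ is a repelling fixed point. -/

import Mathlib

/-!
A map with `C z ~ c z` at infinity, `c ≠ 0`, becomes `S w ~ c⁻¹ w` at `0` in the coordinate
`w = 1 / z`, so its multiplier at `∞` is `c⁻¹`. For the Chebyshev map, comparing leading
coefficients gives `c = 1 - d (3 d - 1) / (2 d ^ 3) = (2 d ^ 2 - 3 d + 1) / (2 d ^ 2)`, and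
`2 d ^ 2 - 3 d + 1 = (2 d - 1) (d - 1)` lies strictly between `0` and `2 d ^ 2` for `d > 1`.
-/

open Bornology Filter Topology

theorem hasDerivAt_zero_of_tendsto_div_cobounded {𝕜 : Type*} [NontriviallyNormedField 𝕜]
    {C S : 𝕜 → 𝕜} {c : 𝕜} (hc : c ≠ 0)
    (hC : Tendsto (fun z ↦ C z / z) (cobounded 𝕜) (𝓝 c))
    (hS0 : S 0 = 0) (hS : ∀ᶠ w in 𝓝[≠] 0, S w = 1 / C (1 / w)) :
    HasDerivAt S c⁻¹ 0 := by
  rw [hasDerivAt_iff_tendsto_slope]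
  refine ((hC.comp tendsto_inv₀_nhdsNE_zero).inv₀ hc).congr' ?_
  filter_upwards [hS] with w hw
  simp [slope_def_field, hS0, hw, div_eq_mul_inv, mul_comm]

/-- Chebyshev's method for `z ^ k * (z - 1) ^ m`. The exponents enter only as coefficients, so
they may be arbitrary elements of the field. At the pole `(k + m) * z = k`, where the quotient is
`x / 0 = 0`, the value is the meaningless `z`. -/
def chebyshevMap {𝕜 : Type*} [Field 𝕜] (k m z : 𝕜) : 𝕜 :=
  z - z * (z - 1) *
    ((k + m) * (3 * k + 3 * m - 1) * z ^ 2 - 2 * k * (3 * k + 3 * m - 1) * z + (3 * k ^ 2 - k)) /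
      (2 * ((k + m) * z - k) ^ 3)

theorem chebyshevMap_div_self {𝕜 : Type*} [Field 𝕜] (k m : 𝕜) {z : 𝕜} (hz : z ≠ 0) :
    chebyshevMap k m z / z =
      1 - (1 - z⁻¹) * ((k + m) * (3 * k + 3 * m - 1) - 2 * k * (3 * k + 3 * m - 1) * z⁻¹ +
        (3 * k ^ 2 - k) * z⁻¹ ^ 2) / (2 * (k + m - k * z⁻¹) ^ 3) := by
  have hpole : (k + m) * z - k = z * (k + m - k * z⁻¹) := by field_simp
  rw [chebyshevMap, hpole]
  field_simp

theorem tendsto_chebyshevMap_div_self_cobounded {𝕜 : Type*} [NormedField 𝕜] [NeZero (2 : 𝕜)]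
    {k m : 𝕜} (hkm : k + m ≠ 0) :
    Tendsto (fun z ↦ chebyshevMap k m z / z) (cobounded 𝕜)
      (𝓝 ((2 * (k + m) ^ 2 - 3 * (k + m) + 1) / (2 * (k + m) ^ 2))) := by
  let F : 𝕜 → 𝕜 := fun w ↦
    1 - (1 - w) * ((k + m) * (3 * k + 3 * m - 1) - 2 * k * (3 * k + 3 * m - 1) * w +
      (3 * k ^ 2 - k) * w ^ 2) / (2 * (k + m - k * w) ^ 3)
  have hF : ContinuousAt F 0 :=
    continuousAt_const.sub <|
      ContinuousAt.div (by fun_prop) (by fun_prop) (by simp [hkm, two_ne_zero])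
  have hF0 : F 0 = (2 * (k + m) ^ 2 - 3 * (k + m) + 1) / (2 * (k + m) ^ 2) := by
    have h2 : (2 : 𝕜) ≠ 0 := two_ne_zero
    simp only [F, mul_zero, sub_zero]
    field_simp
    ring
  rw [← hF0]
  refine (hF.tendsto.comp tendsto_inv₀_cobounded).congr' ?_
  filter_upwards [eventually_ne_cobounded 0] with z hz
  exact (chebyshevMap_div_self k m hz).symm

theorem two_mul_sq_sub_three_mul_add_one_pos {R : Type*} [CommRing R] [LinearOrder R]
    [IsStrictOrderedRing R] {d : R} (hd : 1 < d) : 0 < 2 * d ^ 2 - 3 * d + 1 :=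
  calc
    0 < (2 * d - 1) * (d - 1) := mul_pos (by linarith) (by linarith)
    _ = 2 * d ^ 2 - 3 * d + 1 := by ring

theorem infinity_repelling_general {𝕜 : Type*} [RCLike 𝕜] {k m : 𝕜} {d : ℝ}
    (hd : (d : 𝕜) = k + m) (hd1 : 1 < d) {C S : 𝕜 → 𝕜}
    (hC : ∀ z, (k + m) * z ≠ k → C z = chebyshevMap k m z)
    (hS0 : S 0 = 0) (hS : ∀ w ≠ 0, S w = 1 / C (1 / w)) :
    HasDerivAt S (2 * (d : 𝕜) ^ 2 / (2 * (d : 𝕜) ^ 2 - 3 * d + 1)) 0 ∧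
      1 < 2 * d ^ 2 / (2 * d ^ 2 - 3 * d + 1) := by
  have hpos := two_mul_sq_sub_three_mul_add_one_pos hd1
  have hd0 : (d : 𝕜) ≠ 0 := by exact_mod_cast (zero_lt_one.trans hd1).ne'
  have hden : 2 * (d : 𝕜) ^ 2 - 3 * d + 1 ≠ 0 := by exact_mod_cast hpos.ne'
  have hlim : Tendsto (fun z ↦ C z / z) (cobounded 𝕜)
      (𝓝 ((2 * (d : 𝕜) ^ 2 - 3 * d + 1) / (2 * (d : 𝕜) ^ 2))) := by
    rw [hd] at hd0 ⊢
    refine (tendsto_chebyshevMap_div_self_cobounded hd0).congr' ?_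
    filter_upwards [eventually_ne_cobounded (k / (k + m))] with z hz
    rw [hC z fun h ↦ hz (eq_div_of_mul_eq hd0 (by rw [mul_comm, h]))]
  refine ⟨?_, (one_lt_div hpos).2 (by linarith)⟩
  rw [← inv_div]
  exact hasDerivAt_zero_of_tendsto_div_cobounded
    (div_ne_zero hden (by simpa using hd0)) hlim hS0 (eventually_mem_nhdsWithin.mono hS)

/-- For `k, m ≥ 1` with `d = k + m ≥ 2`, the map `S(w) = 1/C(1/w)` (with `S(0) = 0`),
where `C` is the Chebyshev map for `z^k(z-1)^m`, has derivative `2d²/(2d² - 3d + 1)` at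
`0`; this multiplier of the fixed point `∞` of `C` is `> 1`, so `∞` is repelling. -/
theorem infinity_repelling (k m : ℕ) (hk : 1 ≤ k) (hm : 1 ≤ m)
    (d : ℕ) (hd : d = k + m) (hd2 : 2 ≤ d)
    (C : ℂ → ℂ)
    (hC : ∀ z : ℂ, ((k : ℂ) + m) * z ≠ k →
      C z = z - z * (z - 1) *
        (((k : ℂ) + m) * (3 * k + 3 * m - 1) * z ^ 2 - 2 * k * (3 * k + 3 * m - 1) * z
          + (3 * (k : ℂ) ^ 2 - k)) / (2 * (((k : ℂ) + m) * z - k) ^ 3))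
    (S : ℂ → ℂ) (hS0 : S 0 = 0) (hS : ∀ w : ℂ, w ≠ 0 → S w = 1 / C (1 / w)) :
    HasDerivAt S (2 * (d : ℂ) ^ 2 / (2 * (d : ℂ) ^ 2 - 3 * d + 1)) 0 ∧
      1 < 2 * (d : ℝ) ^ 2 / (2 * (d : ℝ) ^ 2 - 3 * d + 1) := by
  simpa using infinity_repelling_general (𝕜 := ℂ) (d := d) (by simp [hd])
    (by exact_mod_cast hd2) hC hS0 hS
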